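/- arXiv:2301.00735 — 2 statements merged into one kernel-verified Lean document; each statement's English description precedes it below -/
import Mathlib

section
/- Under the stated hypotheses, [i, h^j] ⊆ h^{j+1} for every j with 1 ≤ j ≤ s−1. -/
/-!
The proof is by induction on `j`. The base case is `[I, H 1] ⊆ [I, G 1] ⊆ H 2`. For the step, take
`a ∈ I`, `u ∈ H 1`, `v ∈ H j`; the Jacobi identity gives `⁅a, ⁅u, v⁆⁆ = ⁅⁅a, u⁆, v⁆ + ⁅u, ⁅a, v⁆⁆`.
The second term lies in `[H 1, H (j + 1)] = H (j + 2)` by the induction hypothesis. In the first one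
`⁅a, u⁆ ∈ H 2`, so it lies in `[H 2, H j] = [[H 1, H 1], H j]`, which a second use of the Jacobi
identity puts inside `[H 1, [H 1, H j]] = H (j + 2)`.
-/

/-- The subspace spanned by all brackets `⁅a, b⁆` with `a ∈ A`, `b ∈ B`. -/
def bracketSpan (𝕜 : Type*) {L : Type*} [Field 𝕜] [LieRing L] [LieAlgebra 𝕜 L]
    (A B : Submodule 𝕜 L) : Submodule 𝕜 L :=
  Submodule.span 𝕜 {x | ∃ a ∈ A, ∃ b ∈ B, x = ⁅a, b⁆}

theorem bracketSpan_le_iff {𝕜 L : Type*} [Field 𝕜] [LieRing L] [LieAlgebra 𝕜 L]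
    {A B C : Submodule 𝕜 L} :
    bracketSpan 𝕜 A B ≤ C ↔ ∀ a ∈ A, ∀ b ∈ B, ⁅a, b⁆ ∈ C := by
  unfold bracketSpan
  rw [Submodule.span_le]
  constructor
  · intro h a ha b hb
    exact h ⟨a, ha, b, hb, rfl⟩
  · rintro h _ ⟨a, ha, b, hb, rfl⟩
    exact h a ha b hb

theorem lie_mem_bracketSpan {𝕜 L : Type*} [Field 𝕜] [LieRing L] [LieAlgebra 𝕜 L]
    {A B : Submodule 𝕜 L} {a b : L} (ha : a ∈ A) (hb : b ∈ B) : ⁅a, b⁆ ∈ bracketSpan 𝕜 A B :=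
  bracketSpan_le_iff.1 le_rfl a ha b hb

theorem bracketSpan_bracketSpan_le_iff_right {𝕜 L : Type*} [Field 𝕜] [LieRing L] [LieAlgebra 𝕜 L]
    {A B C D : Submodule 𝕜 L} :
    bracketSpan 𝕜 A (bracketSpan 𝕜 B C) ≤ D ↔
      ∀ a ∈ A, ∀ b ∈ B, ∀ c ∈ C, ⁅a, ⁅b, c⁆⁆ ∈ D := by
  rw [bracketSpan_le_iff]
  refine forall₂_congr fun a _ => ?_
  exact bracketSpan_le_iff (C := D.comap (LieAlgebra.ad 𝕜 L a : L →ₗ[𝕜] L))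

/-- By the Jacobi identity, `[[A, A], B] ⊆ [A, [A, B]]`. -/
theorem bracketSpan_self_bracketSpan_le {𝕜 L : Type*} [Field 𝕜] [LieRing L] [LieAlgebra 𝕜 L]
    (A B : Submodule 𝕜 L) :
    bracketSpan 𝕜 (bracketSpan 𝕜 A A) B ≤ bracketSpan 𝕜 A (bracketSpan 𝕜 A B) := by
  rw [bracketSpan_le_iff]
  intro x hx b hb
  rw [← neg_mem_iff, lie_skew]
  refine bracketSpan_le_iff.1 (bracketSpan_bracketSpan_le_iff_right.2 ?_) b hb x hx
  intro b hb u hu v hv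
  rw [← neg_mem_iff, lie_skew, lie_lie]
  exact sub_mem (lie_mem_bracketSpan hu (lie_mem_bracketSpan hv hb))
    (lie_mem_bracketSpan hv (lie_mem_bracketSpan hu hb))

theorem stmt_1 {𝕜 L : Type*} [Field 𝕜] [CharZero 𝕜] [LieRing L] [LieAlgebra 𝕜 L]
    (s : ℕ) (hs : 2 ≤ s) (G H : ℕ → Submodule 𝕜 L)
    (hsum : (⨆ j ∈ Finset.Icc 1 s, G j) = ⊤)
    (hG : ∀ j, 1 ≤ j → j ≤ s - 1 → G (j + 1) = bracketSpan 𝕜 (G 1) (G j))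
    (hH : ∀ j, 1 ≤ j → j ≤ s - 1 → H (j + 1) = bracketSpan 𝕜 (H 1) (H j))
    (I : Submodule 𝕜 L) (hIG : I ≤ G 1)
    (hsup : I ⊔ H 1 = G 1) (hinf : I ⊓ H 1 = ⊥)
    (hbr : bracketSpan 𝕜 I (G 1) ≤ H 2) :
    ∀ j, 1 ≤ j → j ≤ s - 1 → bracketSpan 𝕜 I (H j) ≤ H (j + 1) := by
  have hI : ∀ a ∈ I, ∀ u ∈ H 1, ⁅a, u⁆ ∈ H 2 := fun a ha u hu =>
    bracketSpan_le_iff.1 hbr a ha u (hsup ▸ Submodule.mem_sup_right hu)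
  have hH2 : H 2 = bracketSpan 𝕜 (H 1) (H 1) := hH 1 le_rfl (by omega)
  intro j hj
  induction j, hj using Nat.le_induction with
  | base => exact fun _ => bracketSpan_le_iff.2 hI
  | succ j hj ih =>
    intro hjs
    have hHj := hH j hj (by omega)
    have hHj' := hH (j + 1) (by omega) hjs
    have ih := bracketSpan_le_iff.1 (ih (by omega))
    rw [hHj, bracketSpan_bracketSpan_le_iff_right]
    intro a ha u hu v hv
    rw [leibniz_lie, hHj']
    refine add_mem ?_ (lie_mem_bracketSpan hu (ih a ha v hv))
    rw [hHj]
    exact bracketSpan_self_bracketSpan_le _ _ (lie_mem_bracketSpan (hH2 ▸ hI a ha u hu) hv)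
end

section
/- The Grushin plane (ℝ², d) is a geodesic metric space: for all a, b ∈ ℝ² there exists a geodesic γ of d with γ(0) = a and γ(1) = b. -/
/-!
The proof is the Hopf–Rinow argument for length spaces, arranged so that no reparametrization by
arc length and no Arzelà–Ascoli theorem is needed.

Curves of length less than `d(a,b) + ε` are sampled at the times where the length already
travelled is `τ` times the total (`exists_approx`). This gives maps `σ` on `[0,1]` from `a` to `b`,
of no regularity, with `d(σ s, σ t) ≤ |s - t| (d(a,b) + ε)`. They stay in a fixed Euclidean ball
(`GPair.bound`), so they have a pointwise limit along an ultrafilter as `ε → 0`. The estimate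
`d((x,y),(x',y')) ≤ |x - x'| + 3 √|y - y'|` (`dist_le_explicit`) makes `d` continuous for the
Euclidean topology, so the limit `γ` satisfies `d(γ s, γ t) ≤ |s - t| d(a,b)`, and the triangle
inequality turns this into an equality.

The infima defining `d` are handled through the relation `Conn a b L`: some horizontal curve leads
from `a` to `b` with length `L`. For it, curves and controls are extended to the whole line, which
makes affine reparametrization, restriction, reversal and concatenation simple.
-/

open MeasureTheory Set

/-- `u` is a valid (bounded measurable) control for the Lipschitz curve `γ` in the
Grushin plane: `γ'(t) = (u₁(t), γ₁(t)·u₂(t))` for a.e. `t ∈ [0,1]`, expressed in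
integral form. -/
def IsAdmissiblePair (γ u : ℝ → ℝ × ℝ) : Prop :=
  (∃ K : NNReal, LipschitzOnWith K γ (Icc 0 1)) ∧
  AEStronglyMeasurable u (volume.restrict (Icc (0 : ℝ) 1)) ∧
  (∃ C : ℝ, ∀ t ∈ Icc (0 : ℝ) 1, ‖u t‖ ≤ C) ∧
  ∀ t ∈ Icc (0 : ℝ) 1,
    γ t = γ 0 + ∫ s in (0 : ℝ)..t, (((u s).1, (γ s).1 * (u s).2) : ℝ × ℝ)

/-- A curve is admissible if it has a control. -/
def IsAdmissible (γ : ℝ → ℝ × ℝ) : Prop := ∃ u, IsAdmissiblePair γ u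

/-- The length of an admissible curve: infimum over controls of the Euclidean
norm of the control. -/
noncomputable def curveLength (γ : ℝ → ℝ × ℝ) : ℝ :=
  sInf {L | ∃ u, IsAdmissiblePair γ u ∧
    L = ∫ t in (0 : ℝ)..1, Real.sqrt ((u t).1 ^ 2 + (u t).2 ^ 2)}

/-- The Grushin (Carnot–Carathéodory) distance on `ℝ²`. -/
noncomputable def grushinDist (a b : ℝ × ℝ) : ℝ :=
  sInf {L | ∃ γ, IsAdmissible γ ∧ γ 0 = a ∧ γ 1 = b ∧ L = curveLength γ}

/-- A geodesic of the Grushin distance, parametrized on `[0,1]`. -/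
def IsGeodesic (γ : ℝ → ℝ × ℝ) : Prop :=
  ∀ s ∈ Icc (0 : ℝ) 1, ∀ t ∈ Icc (0 : ℝ) 1,
    grushinDist (γ s) (γ t) = |s - t| * grushinDist (γ 0) (γ 1)

open Filter Topology

namespace Grushin

/-! ### Horizontal curves on the real line -/

/-- The length density of a control. -/
noncomputable def speed (w : ℝ × ℝ) : ℝ := Real.sqrt (w.1 ^ 2 + w.2 ^ 2)

/-- The velocity of the curve `γ` prescribed by the control `u`. -/
def vel (γ u : ℝ → ℝ × ℝ) (s : ℝ) : ℝ × ℝ := ((u s).1, (γ s).1 * (u s).2)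

lemma speed_nonneg (w : ℝ × ℝ) : 0 ≤ speed w := Real.sqrt_nonneg _

lemma abs_fst_le_speed (w : ℝ × ℝ) : |w.1| ≤ speed w :=
  Real.abs_le_sqrt (by nlinarith [sq_nonneg w.2])

lemma abs_snd_le_speed (w : ℝ × ℝ) : |w.2| ≤ speed w :=
  Real.abs_le_sqrt (by nlinarith [sq_nonneg w.1])

lemma speed_le (w : ℝ × ℝ) : speed w ≤ 2 * ‖w‖ := by
  have h1 : |w.1| ≤ ‖w‖ := norm_fst_le w
  have h2 : |w.2| ≤ ‖w‖ := norm_snd_le w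
  have h0 := norm_nonneg w
  refine Real.sqrt_le_iff.2 ⟨by positivity, ?_⟩
  rw [← sq_abs w.1, ← sq_abs w.2]
  nlinarith [abs_nonneg w.1, abs_nonneg w.2]

lemma speed_smul (c : ℝ) (w : ℝ × ℝ) : speed (c • w) = |c| * speed w := by
  unfold speed
  rw [← Real.sqrt_sq_eq_abs, ← Real.sqrt_mul (sq_nonneg c)]
  congr 1
  simp only [Prod.smul_fst, Prod.smul_snd, smul_eq_mul]
  ring

lemma measurable_speed : Measurable speed := by
  unfold speed; fun_prop

/-- A horizontal curve defined on all of `ℝ`, with a globally bounded Borel control. The integral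
form of the equation of motion is imposed between any two times, in either order. -/
structure GPair (γ u : ℝ → ℝ × ℝ) : Prop where
  cont : Continuous γ
  meas : Measurable u
  bdd : ∃ C : ℝ, ∀ t, ‖u t‖ ≤ C
  eqn : ∀ s t, γ t = γ s + ∫ r in s..t, vel γ u r

namespace GPair

variable {γ u : ℝ → ℝ × ℝ}

lemma measurable_vel (hγ : Continuous γ) (hu : Measurable u) : Measurable (vel γ u) := by
  have := hγ.measurable
  unfold vel; fun_prop

lemma norm_vel_le (γ u : ℝ → ℝ × ℝ) (t : ℝ) : ‖vel γ u t‖ ≤ (1 + ‖γ t‖) * ‖u t‖ := by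
  have h1 : |(u t).1| ≤ ‖u t‖ := norm_fst_le (u t)
  have h2 : |(u t).2| ≤ ‖u t‖ := norm_snd_le (u t)
  have h3 : |(γ t).1| ≤ ‖γ t‖ := norm_fst_le (γ t)
  have h4 := norm_nonneg (u t)
  have h5 := norm_nonneg (γ t)
  refine max_le ?_ ?_
  · simp only [vel, Real.norm_eq_abs]; nlinarith
  · simp only [vel, Real.norm_eq_abs, abs_mul]
    calc _ ≤ ‖γ t‖ * ‖u t‖ := by gcongr
      _ ≤ _ := by nlinarith

lemma intervalIntegrable_vel (hγ : Continuous γ) (hu : Measurable u)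
    (hb : ∃ C : ℝ, ∀ t, ‖u t‖ ≤ C) (s t : ℝ) : IntervalIntegrable (vel γ u) volume s t := by
  obtain ⟨C, hC⟩ := hb
  have : IntervalIntegrable (fun t => (1 + ‖γ t‖) * C) volume s t :=
    Continuous.intervalIntegrable (by fun_prop) _ _
  refine this.mono_fun (measurable_vel hγ hu).aestronglyMeasurable (ae_of_all _ fun r => ?_)
  refine (norm_vel_le γ u r).trans (le_trans ?_ (le_abs_self _))
  have := hC r
  gcongr

lemma intervalIntegrable_speed (h : GPair γ u) (s t : ℝ) :
    IntervalIntegrable (fun r => speed (u r)) volume s t := by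
  obtain ⟨C, hC⟩ := h.bdd
  refine (intervalIntegrable_const (c := 2 * C)).mono_fun
    (measurable_speed.comp h.meas).aestronglyMeasurable (ae_of_all _ fun r => ?_)
  beta_reduce
  rw [Real.norm_of_nonneg (speed_nonneg _)]
  refine le_trans ((speed_le _).trans ?_) (le_abs_self _)
  linarith [hC r]

lemma vel_comp (c e : ℝ) : vel (fun t => γ (c * t + e)) (fun t => c • u (c * t + e))
    = fun t => c • vel γ u (c * t + e) := by
  funext t
  simp only [vel, Prod.smul_fst, Prod.smul_snd, smul_eq_mul, Prod.smul_mk]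
  ring_nf

/-- Affine reparametrization; negative `c` reverses the curve. -/
lemma affine (h : GPair γ u) (c e : ℝ) :
    GPair (fun t => γ (c * t + e)) (fun t => c • u (c * t + e)) where
  cont := h.cont.comp (by fun_prop)
  meas := (h.meas.comp (by fun_prop : Measurable fun t : ℝ => c * t + e)).const_smul c
  bdd := by
    obtain ⟨C, hC⟩ := h.bdd
    refine ⟨|c| * C, fun t => ?_⟩
    rw [norm_smul, Real.norm_eq_abs]
    have := hC (c * t + e)
    gcongr
  eqn s t := by
    rw [vel_comp, intervalIntegral.integral_smul,
      intervalIntegral.smul_integral_comp_mul_add (vel γ u) c e]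
    exact h.eqn _ _

lemma length_affine (u : ℝ → ℝ × ℝ) (c e s t : ℝ) :
    ∫ r in s..t, speed (c • u (c * r + e)) =
      SignType.sign c * ∫ r in (c * s + e)..(c * t + e), speed (u r) := by
  have := intervalIntegral.smul_integral_comp_mul_add (a := s) (b := t)
    (fun r => speed (u r)) c e
  rw [← this]
  simp only [speed_smul, intervalIntegral.integral_const_mul, smul_eq_mul]
  rw [← mul_assoc]
  congr 1
  exact (sign_mul_self c).symm

/-- Concatenation at the time `q`. -/
lemma glue {γ' u' : ℝ → ℝ × ℝ} (h : GPair γ u) (h' : GPair γ' u') (q : ℝ) (hq : γ q = γ' q) :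
    GPair (fun t => if t ≤ q then γ t else γ' t) (fun t => if t ≤ q then u t else u' t) := by
  set g := fun t => if t ≤ q then γ t else γ' t with hg
  set w := fun t => if t ≤ q then u t else u' t with hw
  have hc : Continuous g := Continuous.if_le h.cont h'.cont continuous_id continuous_const
    (by intro x hx; rw [hx, hq])
  have hm : Measurable w := Measurable.ite measurableSet_Iic h.meas h'.meas
  have hb : ∃ C : ℝ, ∀ t, ‖w t‖ ≤ C := by
    obtain ⟨C, hC⟩ := h.bdd
    obtain ⟨C', hC'⟩ := h'.bdd
    refine ⟨max C C', fun t => ?_⟩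
    simp only [hw]; split_ifs
    · exact (hC t).trans (le_max_left _ _)
    · exact (hC' t).trans (le_max_right _ _)
  -- It suffices to integrate from the junction time `q`.
  have key : ∀ t, g t = g q + ∫ r in q..t, vel g w r := by
    intro t
    have hgq : g q = γ q := by simp [hg]
    rcases le_or_gt t q with ht | ht
    · have : g t = γ t := by simp [hg, ht]
      rw [this, hgq, h.eqn q t]
      congr 1
      refine intervalIntegral.integral_congr fun r hr => ?_
      rw [uIcc_of_ge ht] at hr
      simp [vel, hg, hw, hr.2]
    · have : g t = γ' t := by simp [hg, ht]
      rw [this, hgq, hq, h'.eqn q t]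
      congr 1
      refine intervalIntegral.integral_congr_ae (ae_of_all _ fun r hr => ?_)
      rw [uIoc_of_le ht.le] at hr
      simp [vel, hg, hw, not_le.2 hr.1]
  refine ⟨hc, hm, hb, fun s t => ?_⟩
  have hi := intervalIntegrable_vel hc hm hb
  rw [key t, key s, add_assoc, intervalIntegral.integral_add_adjacent_intervals (hi _ _) (hi _ _)]

lemma eqn_fst (h : GPair γ u) (s t : ℝ) : (γ t).1 = (γ s).1 + ∫ r in s..t, (u r).1 := by
  have := (ContinuousLinearMap.fst ℝ ℝ ℝ).intervalIntegral_comp_comm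
    (intervalIntegrable_vel h.cont h.meas h.bdd s t)
  rw [h.eqn s t]
  simp only [Prod.fst_add]
  congr 1
  exact this.symm

lemma eqn_snd (h : GPair γ u) (s t : ℝ) :
    (γ t).2 = (γ s).2 + ∫ r in s..t, (γ r).1 * (u r).2 := by
  have := (ContinuousLinearMap.snd ℝ ℝ ℝ).intervalIntegral_comp_comm
    (intervalIntegrable_vel h.cont h.meas h.bdd s t)
  rw [h.eqn s t]
  simp only [Prod.snd_add]
  congr 1
  exact this.symm

/-- A curve starting at `a` and of length at most `M` stays in a Euclidean ball whose radius
depends only on `a` and `M`. -/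
lemma bound (h : GPair γ u) {p q M : ℝ} (hM : ∫ r in p..q, speed (u r) ≤ M) {t : ℝ}
    (ht : t ∈ Icc p q) : dist (γ t) (γ p) ≤ M + (|(γ p).1| + M) * M := by
  have hlen : ∀ t ∈ Icc p q, ∫ r in p..t, speed (u r) ≤ M := fun t ht => by
    refine le_trans ?_ hM
    exact intervalIntegral.integral_mono_interval le_rfl ht.1 ht.2
      (ae_of_all _ fun r => speed_nonneg _) (h.intervalIntegrable_speed _ _)
  have hM0 : 0 ≤ M := le_trans
    (intervalIntegral.integral_nonneg (ht.1.trans ht.2) fun r _ => speed_nonneg _) hM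
  have h1 : ∀ t ∈ Icc p q, |(γ t).1 - (γ p).1| ≤ M := fun t ht => by
    rw [h.eqn_fst p t, add_sub_cancel_left]
    refine le_trans ?_ (hlen t ht)
    rw [← Real.norm_eq_abs]
    exact intervalIntegral.norm_integral_le_of_norm_le ht.1
      (ae_of_all _ fun r _ => abs_fst_le_speed (u r)) (h.intervalIntegrable_speed _ _)
  have h1' : ∀ t ∈ Icc p q, |(γ t).1| ≤ |(γ p).1| + M := fun t ht => by
    have := abs_sub_abs_le_abs_sub (γ t).1 (γ p).1
    linarith [h1 t ht]
  have h2 : |(γ t).2 - (γ p).2| ≤ (|(γ p).1| + M) * M := by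
    rw [h.eqn_snd p t, add_sub_cancel_left]
    have hb : |∫ r in p..t, (γ r).1 * (u r).2| ≤
        ∫ r in p..t, (|(γ p).1| + M) * speed (u r) := by
      rw [← Real.norm_eq_abs]
      refine intervalIntegral.norm_integral_le_of_norm_le ht.1
        (ae_of_all _ fun r hr => ?_) ((h.intervalIntegrable_speed _ _).const_mul _)
      rw [Real.norm_eq_abs, abs_mul]
      have := h1' r ⟨hr.1.le, hr.2.trans ht.2⟩
      have := abs_snd_le_speed (u r)
      gcongr
    refine hb.trans ?_
    rw [intervalIntegral.integral_const_mul]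
    have := hlen t ht
    gcongr
  have h3 := h1 t ht
  have h4 : 0 ≤ (|(γ p).1| + M) * M := by positivity
  rw [Prod.dist_eq, Real.dist_eq, Real.dist_eq]
  exact max_le (by linarith) (by linarith)

lemma isAdmissiblePair (h : GPair γ u) : IsAdmissiblePair γ u := by
  obtain ⟨C, hC⟩ := h.bdd
  refine ⟨?_, h.meas.aestronglyMeasurable, ⟨C, fun t _ => hC t⟩, fun t _ => h.eqn 0 t⟩
  obtain ⟨R, hR⟩ := (isCompact_Icc (a := (0 : ℝ)) (b := 1)).exists_bound_of_continuousOn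
    h.cont.continuousOn
  have hC0 : 0 ≤ C := (norm_nonneg _).trans (hC 0)
  have hR0 : 0 ≤ R := (norm_nonneg _).trans (hR 0 (by simp))
  refine ⟨⟨(1 + R) * C, by positivity⟩, LipschitzOnWith.of_dist_le_mul fun x hx y hy => ?_⟩
  rw [dist_eq_norm, h.eqn y x, add_sub_cancel_left, Real.dist_eq]
  refine intervalIntegral.norm_integral_le_of_norm_le_const fun r hr => ?_
  have hr' : r ∈ Icc (0 : ℝ) 1 := uIcc_subset_Icc hy hx (uIoc_subset_uIcc hr)
  have h1 := hC r
  have h2 := hR r hr'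
  refine (norm_vel_le γ u r).trans ?_
  show _ ≤ (1 + R) * C
  gcongr

end GPair

/-! ### Points joined by horizontal curves of given length -/

/-- Some horizontal curve, over some time interval, leads from `a` to `b` and has a control of
total length `L`. -/
def Conn (a b : ℝ × ℝ) (L : ℝ) : Prop :=
  ∃ γ u p q, GPair γ u ∧ p ≤ q ∧ γ p = a ∧ γ q = b ∧ ∫ r in p..q, speed (u r) = L

lemma Conn.nonneg {a b : ℝ × ℝ} {L : ℝ} (h : Conn a b L) : 0 ≤ L := by
  obtain ⟨γ, u, p, q, -, hpq, -, -, rfl⟩ := h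
  exact intervalIntegral.integral_nonneg hpq fun r _ => speed_nonneg _

lemma Conn.symm {a b : ℝ × ℝ} {L : ℝ} (h : Conn a b L) : Conn b a L := by
  obtain ⟨γ, u, p, q, h, hpq, rfl, rfl, rfl⟩ := h
  refine ⟨_, _, -q, -p, h.affine (-1) 0, by linarith, by simp, by simp, ?_⟩
  rw [GPair.length_affine]
  simp only [neg_mul, one_mul, neg_neg, add_zero]
  rw [intervalIntegral.integral_symm p q]
  simp

lemma Conn.trans {a b c : ℝ × ℝ} {L M : ℝ} (h : Conn a b L) (h' : Conn b c M) :
    Conn a c (L + M) := by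
  obtain ⟨γ, u, p, q, h, hpq, rfl, rfl, rfl⟩ := h
  obtain ⟨γ', u', p', q', h', hpq', hb, rfl, rfl⟩ := h'
  -- Shift the second curve in time so that it starts when the first one ends.
  have hs := h'.affine 1 (p' - q)
  have hl := GPair.length_affine u' 1 (p' - q) q (q + (q' - p'))
  have e1 : (1 : ℝ) * q + (p' - q) = p' := by ring
  have e2 : (1 : ℝ) * (q + (q' - p')) + (p' - q) = q' := by ring
  rw [e1, e2] at hl
  have hg := h.glue hs q (by simp only [e1, hb])
  refine ⟨_, _, p, q + (q' - p'), hg, by linarith, by simp [hpq], ?_, ?_⟩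
  · rcases hpq'.eq_or_lt with rfl | hlt
    · simp [hb]
    · rw [if_neg (by linarith)]
      simp only [e2]
  · rw [← intervalIntegral.integral_add_adjacent_intervals
      (hg.intervalIntegrable_speed p q) (hg.intervalIntegrable_speed q _)]
    congr 1
    · refine intervalIntegral.integral_congr fun r hr => ?_
      rw [uIcc_of_le hpq] at hr
      simp [hr.2]
    · rw [show (∫ r in p'..q', speed (u' r)) = _ by
        simpa using hl.symm]
      refine intervalIntegral.integral_congr_ae (ae_of_all _ fun r hr => ?_)
      rw [uIoc_of_le (by linarith)] at hr
      simp [not_le.2 hr.1]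

lemma conn_horizontal (x x' y : ℝ) : Conn (x, y) (x', y) |x - x'| := by
  refine ⟨fun t => (x + t * (x' - x), y), fun _ => (x' - x, 0), 0, 1,
    ⟨by fun_prop, measurable_const, ⟨_, fun _ => le_rfl⟩, fun s t => ?_⟩, zero_le_one,
    by simp, by simp, ?_⟩
  · simp [vel]; ring
  · simp [speed, Real.sqrt_sq_eq_abs, abs_sub_comm]

lemma conn_vertical {x : ℝ} (hx : x ≠ 0) (y y' : ℝ) : Conn (x, y) (x, y') (|y' - y| / |x|) := by
  refine ⟨fun t => (x, y + t * (y' - y)), fun _ => (0, (y' - y) / x), 0, 1,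
    ⟨by fun_prop, measurable_const, ⟨_, fun _ => le_rfl⟩, fun s t => ?_⟩, zero_le_one,
    by simp, by simp, ?_⟩
  · simp [vel, mul_div_cancel₀ _ hx]; field_simp; ring
  · simp [speed, Real.sqrt_sq_eq_abs, abs_div]

/-- To climb by `h` one first moves `√|h|` away from the singular line, where climbing costs at
most `√|h|`, and then comes back. -/
lemma conn_explicit (a b : ℝ × ℝ) :
    ∃ L, L ≤ |a.1 - b.1| + 3 * Real.sqrt |a.2 - b.2| ∧ Conn a b L := by
  obtain ⟨x, y⟩ := a
  obtain ⟨x', y'⟩ := b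
  by_cases hy : y = y'
  · subst hy
    exact ⟨_, by simp, conn_horizontal x x' y⟩
  set r := Real.sqrt |y - y'| with hr
  have hr0 : 0 < r := Real.sqrt_pos.2 (abs_pos.2 (sub_ne_zero.2 hy))
  have hr2 : |y' - y| = r * r := by
    rw [hr, Real.mul_self_sqrt (abs_nonneg _), abs_sub_comm]
  obtain ⟨z, hz, hzx⟩ : ∃ z, r ≤ |z| ∧ |x - z| = r := by
    rcases le_total 0 x with h | h
    · exact ⟨x + r, by rw [abs_of_nonneg] <;> linarith, by simp [abs_of_pos hr0]⟩
    · exact ⟨x - r, by rw [abs_of_nonpos] <;> linarith, by simp [abs_of_pos hr0]⟩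
  have hz0 : z ≠ 0 := abs_pos.1 (hr0.trans_le hz)
  refine ⟨_, ?_, ((conn_horizontal x z y).trans (conn_vertical hz0 y y')).trans
    ((conn_horizontal z x y').trans (conn_horizontal x x' y'))⟩
  have h1 : |y' - y| / |z| ≤ r := by
    rw [div_le_iff₀ (hr0.trans_le hz), hr2]; gcongr
  rw [abs_sub_comm z x, hzx]
  simp only
  linarith

/-! ### The Grushin distance -/

lemma curveLength_le {γ u : ℝ → ℝ × ℝ} (h : IsAdmissiblePair γ u) :
    curveLength γ ≤ ∫ t in (0 : ℝ)..1, speed (u t) := by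
  refine csInf_le ⟨0, ?_⟩ ⟨u, h, rfl⟩
  rintro _ ⟨v, -, rfl⟩
  exact intervalIntegral.integral_nonneg zero_le_one fun r _ => Real.sqrt_nonneg _

lemma curveLength_nonneg (γ : ℝ → ℝ × ℝ) : 0 ≤ curveLength γ := by
  refine Real.sInf_nonneg ?_
  rintro _ ⟨v, -, rfl⟩
  exact intervalIntegral.integral_nonneg zero_le_one fun r _ => Real.sqrt_nonneg _

/-- Any connecting length bounds the distance, since the time interval can be rescaled to `[0,1]`. -/
lemma dist_le {a b : ℝ × ℝ} {L : ℝ} (h : Conn a b L) : grushinDist a b ≤ L := by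
  obtain ⟨γ, u, p, q, h, hpq, rfl, rfl, rfl⟩ := h
  have hs := (h.affine (q - p) p).isAdmissiblePair
  refine le_trans (csInf_le ⟨0, ?_⟩ ⟨_, ⟨_, hs⟩, by simp, by simp, rfl⟩)
    ((curveLength_le hs).trans ?_)
  · rintro _ ⟨v, -, -, -, rfl⟩
    exact curveLength_nonneg v
  · rw [GPair.length_affine]
    rcases hpq.eq_or_lt with rfl | hlt
    · simp
    · simp [sign_pos (sub_pos.2 hlt)]

/-- A control on `[0,1]` is changed on a null set into a Borel one and cut off outside `[0,1]`; the curve is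
extended by constants. -/
lemma conn_of_pair {γ u : ℝ → ℝ × ℝ} (h : IsAdmissiblePair γ u) :
    Conn (γ 0) (γ 1) (∫ t in (0 : ℝ)..1, speed (u t)) := by
  obtain ⟨⟨K, hK⟩, hm, ⟨C, hC⟩, heq⟩ := h
  have hC0 : 0 ≤ C := (norm_nonneg _).trans (hC 0 (by simp))
  set v := hm.mk u with hv
  have hvm : Measurable v := hm.stronglyMeasurable_mk.measurable
  set S : Set ℝ := Ioc 0 1 ∩ {t | ‖v t‖ ≤ C} with hS
  have hSm : MeasurableSet S := measurableSet_Ioc.inter (hvm.norm measurableSet_Iic)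
  set w := S.indicator v with hw
  set g : ℝ → ℝ × ℝ := fun t => γ (projIcc 0 1 zero_le_one t) with hg
  have hgI : ∀ t ∈ Icc (0 : ℝ) 1, g t = γ t := fun t ht => by
    simp only [hg]; rw [projIcc_of_mem zero_le_one ht]
  have hgc : Continuous g :=
    hK.continuousOn.domRestrict.comp (continuous_projIcc (h := zero_le_one))
  have hwm : Measurable w := hvm.indicator hSm
  have hwb : ∀ t, ‖w t‖ ≤ C := fun t => by
    by_cases ht : t ∈ S
    · rw [hw, indicator_of_mem ht]; exact ht.2
    · rw [hw, indicator_of_notMem ht]; simpa using hC0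
  have hwu : ∀ᵐ t, t ∈ Ioc (0 : ℝ) 1 → w t = u t := by
    have := (ae_restrict_iff' measurableSet_Icc).1 hm.ae_eq_mk
    filter_upwards [this] with t ht hto
    have h1 := ht ⟨hto.1.le, hto.2⟩
    have : t ∈ S := ⟨hto, by
      show ‖v t‖ ≤ C
      rw [hv, ← h1]; exact hC t ⟨hto.1.le, hto.2⟩⟩
    rw [hw, indicator_of_mem this, hv, h1]
  have hi := GPair.intervalIntegrable_vel hgc hwm ⟨C, hwb⟩
  have h01 : ∀ t ∈ Icc (0 : ℝ) 1, g t = g 0 + ∫ r in (0 : ℝ)..t, vel g w r := fun t ht => by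
    rw [hgI t ht, hgI 0 (by simp), heq t ht]
    congr 1
    refine intervalIntegral.integral_congr_ae ?_
    filter_upwards [hwu] with r hr hr'
    rw [uIoc_of_le ht.1] at hr'
    have : r ∈ Ioc (0 : ℝ) 1 := ⟨hr'.1, hr'.2.trans ht.2⟩
    simp only [vel]
    rw [hr this, hgI r ⟨this.1.le, this.2⟩]
  have key : ∀ t, g t = g 0 + ∫ r in (0 : ℝ)..t, vel g w r := by
    intro t
    rcases le_total t 0 with ht | ht
    · have : ∫ r in (0 : ℝ)..t, vel g w r = ∫ r in (0 : ℝ)..t, 0 := by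
        refine intervalIntegral.integral_congr fun r hr => ?_
        rw [uIcc_of_ge ht] at hr
        have : r ∉ S := fun h => absurd h.1.1 (not_lt.2 hr.2)
        simp [vel, hw, indicator_of_notMem this]
      rw [this]
      simp [hg, projIcc_of_le_left zero_le_one ht]
    rcases le_total t 1 with ht1 | ht1
    · exact h01 t ⟨ht, ht1⟩
    · have : ∫ r in (1 : ℝ)..t, vel g w r = ∫ r in (1 : ℝ)..t, 0 := by
        refine intervalIntegral.integral_congr_ae (ae_of_all _ fun r hr => ?_)
        rw [uIoc_of_le ht1] at hr
        have : r ∉ S := fun h => absurd h.1.2 (not_le.2 hr.1)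
        simp [vel, hw, indicator_of_notMem this]
      rw [← intervalIntegral.integral_add_adjacent_intervals (hi 0 1) (hi 1 t), this,
        ← add_assoc, ← h01 1 (by simp)]
      simp [hg, projIcc_of_right_le zero_le_one ht1]
  refine ⟨g, w, 0, 1, ⟨hgc, hwm, ⟨C, hwb⟩, fun s t => ?_⟩, zero_le_one, hgI 0 (by simp),
    hgI 1 (by simp), ?_⟩
  · rw [key t, key s, add_assoc,
      intervalIntegral.integral_add_adjacent_intervals (hi _ _) (hi _ _)]
  · refine intervalIntegral.integral_congr_ae ?_
    filter_upwards [hwu] with r hr hr'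
    rw [uIoc_of_le zero_le_one] at hr'
    rw [hr hr']

lemma exists_conn_lt (a b : ℝ × ℝ) {ε : ℝ} (hε : 0 < ε) :
    ∃ L, L < grushinDist a b + ε ∧ Conn a b L := by
  have hne : {L | ∃ γ, IsAdmissible γ ∧ γ 0 = a ∧ γ 1 = b ∧ L = curveLength γ}.Nonempty := by
    obtain ⟨L, -, γ, u, p, q, h, -, rfl, rfl, -⟩ := conn_explicit a b
    exact ⟨_, _, ⟨_, (h.affine (q - p) p).isAdmissiblePair⟩, by simp, by simp, rfl⟩
  obtain ⟨_, ⟨γ, ⟨u₀, hu₀⟩, rfl, rfl, rfl⟩, hlt⟩ :=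
    exists_lt_of_csInf_lt hne (lt_add_of_pos_right _ hε)
  obtain ⟨_, ⟨u, hu, rfl⟩, hlt'⟩ := exists_lt_of_csInf_lt (⟨_, u₀, hu₀, rfl⟩ : Set.Nonempty
    {L | ∃ u, IsAdmissiblePair γ u ∧
      L = ∫ t in (0 : ℝ)..1, Real.sqrt ((u t).1 ^ 2 + (u t).2 ^ 2)}) hlt
  exact ⟨_, hlt', conn_of_pair hu⟩

lemma dist_nonneg' (a b : ℝ × ℝ) : 0 ≤ grushinDist a b := by
  refine Real.sInf_nonneg ?_
  rintro _ ⟨v, -, -, -, rfl⟩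
  exact curveLength_nonneg v

lemma dist_symm_le (a b : ℝ × ℝ) : grushinDist a b ≤ grushinDist b a := by
  refine le_of_forall_pos_le_add fun ε hε => ?_
  obtain ⟨L, hL, h⟩ := exists_conn_lt b a hε
  exact (dist_le h.symm).trans hL.le

lemma dist_symm (a b : ℝ × ℝ) : grushinDist a b = grushinDist b a :=
  le_antisymm (dist_symm_le a b) (dist_symm_le b a)

lemma dist_tri (a b c : ℝ × ℝ) : grushinDist a c ≤ grushinDist a b + grushinDist b c := by
  refine le_of_forall_pos_le_add fun ε hε => ?_
  obtain ⟨L, hL, h⟩ := exists_conn_lt a b (half_pos hε)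
  obtain ⟨M, hM, h'⟩ := exists_conn_lt b c (half_pos hε)
  linarith [dist_le (h.trans h')]

lemma dist_le_explicit (a b : ℝ × ℝ) :
    grushinDist a b ≤ |a.1 - b.1| + 3 * Real.sqrt |a.2 - b.2| := by
  obtain ⟨L, hL, h⟩ := conn_explicit a b
  exact (dist_le h).trans hL

lemma tendsto_dist {ι : Type*} {F : Filter ι} {f : ι → ℝ × ℝ} {x : ℝ × ℝ}
    (h : Tendsto f F (𝓝 x)) : Tendsto (fun i => grushinDist (f i) x) F (𝓝 0) := by
  have hc : Continuous fun z : ℝ × ℝ => |z.1 - x.1| + 3 * Real.sqrt |z.2 - x.2| := by fun_prop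
  have := (hc.tendsto x).comp h
  simp only [sub_self, abs_zero, Real.sqrt_zero, mul_zero, add_zero] at this
  exact squeeze_zero (fun i => dist_nonneg' _ _) (fun i => dist_le_explicit _ _) this

/-! ### Almost geodesics and their limit -/

/-- An almost minimizing curve, sampled at the times where the fraction `τ` of its length has been
travelled. -/
lemma exists_approx (a b : ℝ × ℝ) {ε : ℝ} (hε : 0 < ε) :
    ∃ σ : ℝ → ℝ × ℝ, σ 0 = a ∧ σ 1 = b ∧
      (∀ τ ∈ Icc (0 : ℝ) 1, dist (σ τ) a ≤ (grushinDist a b + ε) +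
        (|a.1| + (grushinDist a b + ε)) * (grushinDist a b + ε)) ∧
      ∀ s ∈ Icc (0 : ℝ) 1, ∀ t ∈ Icc (0 : ℝ) 1,
        grushinDist (σ s) (σ t) ≤ |s - t| * (grushinDist a b + ε) := by
  obtain ⟨L, hL, hconn⟩ := exists_conn_lt a b hε
  have hL0 := hconn.nonneg
  obtain ⟨γ, u, p, q, h, hpq, ha, hb, hl⟩ := hconn
  have hi := h.intervalIntegrable_speed
  set ℓ : ℝ → ℝ := fun t => ∫ r in p..t, speed (u r) with hℓ
  have hℓc : Continuous ℓ := intervalIntegral.continuous_primitive (fun s t => hi s t) p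
  have hℓp : ℓ p = 0 := by simp [hℓ]
  have hℓq : ℓ q = L := hl
  have hex : ∀ τ : ℝ, ∃ t, τ ∈ Icc (0 : ℝ) 1 →
      t ∈ Icc p q ∧ ℓ t = τ * L ∧ (τ = 0 → t = p) ∧ (τ = 1 → t = q) := by
    intro τ
    by_cases h0 : τ = 0
    · subst h0
      exact ⟨p, fun _ => ⟨left_mem_Icc.2 hpq, by simp [hℓp], fun _ => rfl, by simp⟩⟩
    by_cases h1 : τ = 1
    · subst h1
      exact ⟨q, fun _ => ⟨right_mem_Icc.2 hpq, by simp [hℓq], by simp, fun _ => rfl⟩⟩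
    by_cases hτ : τ ∈ Icc (0 : ℝ) 1
    · have : τ * L ∈ Icc (ℓ p) (ℓ q) := by
        rw [hℓp, hℓq]
        exact ⟨mul_nonneg hτ.1 hL0, mul_le_of_le_one_left hL0 hτ.2⟩
      obtain ⟨t, ht, hte⟩ := intermediate_value_Icc hpq hℓc.continuousOn this
      exact ⟨t, fun _ => ⟨ht, hte, fun h => absurd h h0, fun h => absurd h h1⟩⟩
    · exact ⟨0, fun h => absurd h hτ⟩
  choose T hT using hex
  -- The distance between two samples, in chronological order, is at most the length in between.
  have hord : ∀ s t, T s ≤ T t → s ∈ Icc (0 : ℝ) 1 → t ∈ Icc (0 : ℝ) 1 →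
      grushinDist (γ (T s)) (γ (T t)) ≤ |s - t| * (grushinDist a b + ε) := by
    intro s t hst hs ht
    refine (dist_le ⟨γ, u, T s, T t, h, hst, rfl, rfl, rfl⟩).trans ?_
    have e : ∫ r in T s..T t, speed (u r) = ℓ (T t) - ℓ (T s) :=
      (intervalIntegral.integral_interval_sub_left (hi _ _) (hi _ _)).symm
    rw [e, (hT s hs).2.1, (hT t ht).2.1, ← sub_mul]
    have : t - s ≤ |s - t| := by rw [abs_sub_comm]; exact le_abs_self _
    calc (t - s) * L ≤ |s - t| * L := by gcongr
      _ ≤ _ := by gcongr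
  refine ⟨fun τ => γ (T τ), ?_, ?_, fun τ hτ => ?_, fun s hs t ht => ?_⟩
  · simp only [(hT 0 (by simp)).2.2.1 rfl, ha]
  · simp only [(hT 1 (by simp)).2.2.2 rfl, hb]
  · have := h.bound (hl.le.trans hL.le) (hT τ hτ).1
    rwa [ha] at this
  · rcases le_total (T s) (T t) with hst | hst
    · exact hord s t hst hs ht
    · rw [dist_symm, abs_sub_comm]
      exact hord t s hst ht hs

end Grushin

open Grushin in
theorem stmt_10 (a b : ℝ × ℝ) :
    ∃ γ : ℝ → ℝ × ℝ, γ 0 = a ∧ γ 1 = b ∧ IsGeodesic γ := by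
  set D := grushinDist a b with hD
  have hD0 : 0 ≤ D := dist_nonneg' a b
  have hpos : ∀ n : ℕ, (0 : ℝ) < 1 / ((n : ℝ) + 1) := fun n => Nat.one_div_pos_of_nat
  choose σ h0 h1 hbd hdist using fun n : ℕ => exists_approx a b (hpos n)
  set R := (D + 1) + (|a.1| + (D + 1)) * (D + 1) with hR
  have hball : ∀ τ ∈ Icc (0 : ℝ) 1, ∀ n, σ n τ ∈ Metric.closedBall a R := by
    intro τ hτ n
    have : 1 / ((n : ℝ) + 1) ≤ 1 := by
      rw [div_le_one (by positivity)]; linarith [(Nat.cast_nonneg n : (0 : ℝ) ≤ n)]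
    have h2 := (hpos n).le
    refine (hbd n τ hτ).trans ?_
    rw [← hD, hR]
    gcongr
  let U : Ultrafilter ℕ := hyperfilter ℕ
  have hU : (U : Filter ℕ) ≤ atTop := Nat.hyperfilter_le_atTop
  have hlim : ∀ τ : ℝ, ∃ x, τ ∈ Icc (0 : ℝ) 1 → Tendsto (fun n => σ n τ) U (𝓝 x) := by
    intro τ
    by_cases hτ : τ ∈ Icc (0 : ℝ) 1
    · obtain ⟨x, -, hx⟩ := (isCompact_closedBall a R).ultrafilter_le_nhds'
        (U.map fun n => σ n τ) (Ultrafilter.mem_map.2 (Filter.Eventually.of_forall (hball τ hτ)))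
      exact ⟨x, fun _ => hx⟩
    · exact ⟨0, fun h => absurd h hτ⟩
  choose γ hγ using hlim
  have hγ0 : γ 0 = a := tendsto_nhds_unique (hγ 0 (by simp)) (by simp [h0])
  have hγ1 : γ 1 = b := tendsto_nhds_unique (hγ 1 (by simp)) (by simp [h1])
  have hle : ∀ s ∈ Icc (0 : ℝ) 1, ∀ t ∈ Icc (0 : ℝ) 1,
      grushinDist (γ s) (γ t) ≤ |s - t| * D := by
    intro s hs t ht
    have hε : Tendsto (fun n : ℕ => 1 / ((n : ℝ) + 1)) U (𝓝 0) :=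
      tendsto_one_div_add_atTop_nhds_zero_nat.mono_left hU
    have hT := ((tendsto_dist (hγ s hs)).add ((hε.const_add D).const_mul |s - t|)).add
      (tendsto_dist (hγ t ht))
    simp only [zero_add, add_zero] at hT
    refine ge_of_tendsto' hT fun n => ?_
    have e1 := dist_tri (γ s) (σ n s) (γ t)
    have e2 := dist_tri (σ n s) (σ n t) (γ t)
    have e3 := hdist n s hs t ht
    rw [dist_symm (γ s) (σ n s)] at e1
    linarith
  have hord : ∀ s ∈ Icc (0 : ℝ) 1, ∀ t ∈ Icc (0 : ℝ) 1, s ≤ t →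
      grushinDist (γ s) (γ t) = |s - t| * D := by
    intro s hs t ht hst
    refine le_antisymm (hle s hs t ht) ?_
    have e1 := dist_tri a (γ s) b
    have e2 := dist_tri (γ s) (γ t) b
    have e3 := hle 0 (by simp) s hs
    have e4 := hle t ht 1 (by simp)
    rw [hγ0, abs_of_nonpos (by linarith [hs.1])] at e3
    rw [hγ1, abs_of_nonpos (by linarith [ht.2])] at e4
    rw [abs_of_nonpos (by linarith)]
    nlinarith
  refine ⟨γ, hγ0, hγ1, fun s hs t ht => ?_⟩
  rw [hγ0, hγ1, ← hD]
  rcases le_total s t with hst | hst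
  · exact hord s hs t ht hst
  · rw [dist_symm, abs_sub_comm]
    exact hord t ht s hs hst
end
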